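/- arXiv:math-ph/0511080 — 3 statements merged into one kernel-verified Lean document; each statement's English description precedes it below -/
import Mathlib

section
/- Let Γ be a connected simple graph on a vertex set V, let G be a groupoid over a set Q, let f: V → Q, and suppose given for every adjacent pair x ~ y an arrow φ(x,y): f(x) → f(y) such that φ(y,x) = φ(x,y)⁻¹ and such that for every closed walk p based at a vertex x the composite φ(p) equals 1_{f(x)} (triviality of holonomy, i.e. flatness of the discrete field). Then there exists a unique morphism Φ from the pair groupoid on V to G with object map f such that Φ(x,y) = φ(x,y) for every adjacent pair x ~ y. (This is the paper's proposition on the unique extension of a discrete field to a groupoid morphism, with the holonomy hypothesis its proof implicitly uses made explicit.) -/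
/-- A groupoid over a set `Q`, with set of arrows `A`: composition is modeled as a
total operation whose axioms are imposed only on composable pairs
(`tgt g = src h`). -/
structure DiscGroupoid (A : Type*) (Q : Type*) where
  src : A → Q
  tgt : A → Q
  id : Q → A
  comp : A → A → A
  inv : A → A
  src_id : ∀ x, src (id x) = x
  tgt_id : ∀ x, tgt (id x) = x
  src_comp : ∀ g h, tgt g = src h → src (comp g h) = src g
  tgt_comp : ∀ g h, tgt g = src h → tgt (comp g h) = tgt h
  comp_assoc : ∀ g h k, tgt g = src h → tgt h = src k →
    comp (comp g h) k = comp g (comp h k)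
  id_comp : ∀ g, comp (id (src g)) g = g
  comp_id : ∀ g, comp g (id (tgt g)) = g
  src_inv : ∀ g, src (inv g) = tgt g
  tgt_inv : ∀ g, tgt (inv g) = src g
  inv_comp : ∀ g, comp (inv g) g = id (tgt g)
  comp_inv : ∀ g, comp g (inv g) = id (src g)

/-- The composite of the arrows attached by `φ` to the successive edges of a
walk `p` from `x` to `y` in the graph `Γ`; the trivial walk is sent to the
identity arrow `1_{f x}`. -/
def walkProd {V A Q : Type*} (G : DiscGroupoid A Q) {Γ : SimpleGraph V} (f : V → Q)
    (φ : V → V → A) : ∀ {x y : V}, Γ.Walk x y → A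
  | x, _, .nil => G.id (f x)
  | x, _, .cons (v := b) _h p => G.comp (φ x b) (walkProd G f φ p)

/-- A morphism from the pair groupoid on `V` to the groupoid `G` with object map
`f : V → Q`: a family of arrows `Φ x y : f x → f y` with `Φ x x = 1_{f x}` and
`Φ x y · Φ y z = Φ x z`. -/
def IsPairMorphism {V A Q : Type*} (G : DiscGroupoid A Q) (f : V → Q)
    (Φ : V → V → A) : Prop :=
  (∀ x y, G.src (Φ x y) = f x) ∧ (∀ x y, G.tgt (Φ x y) = f y) ∧
  (∀ x, Φ x x = G.id (f x)) ∧
  (∀ x y z, G.comp (Φ x y) (Φ y z) = Φ x z)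

/-!
For parallel walks `p`, `q` from `x` to `y`, flatness around the closed walks `p · q⁻¹` and
`q⁻¹ · q` makes `φ(p)` and `φ(q)` a left and a right inverse of the same arrow, so they are equal.
Transport along any walk from `x` to `y` is therefore well defined, and concatenation of walks
makes it multiplicative. Conversely, a morphism that extends `φ` must send `(x, y)` to `φ(p)` for
every walk `p` from `x` to `y`.
-/

namespace DiscGroupoid

variable {A Q : Type*} {G : DiscGroupoid A Q} {a b c d : Q} {g h k : A}

/-- `G.IsArrow g a b` says that `g` is an arrow `a → b` of `G`. Since arrows carry no endpoints in
their type, this is the form in which composability is tracked. -/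
structure IsArrow (G : DiscGroupoid A Q) (g : A) (a b : Q) : Prop where
  src_eq : G.src g = a
  tgt_eq : G.tgt g = b

theorem isArrow_id (G : DiscGroupoid A Q) (a : Q) : G.IsArrow (G.id a) a a :=
  ⟨G.src_id a, G.tgt_id a⟩

namespace IsArrow

theorem tgt_eq_src (hg : G.IsArrow g a b) (hh : G.IsArrow h b c) : G.tgt g = G.src h :=
  hg.tgt_eq.trans hh.src_eq.symm

theorem comp (hg : G.IsArrow g a b) (hh : G.IsArrow h b c) : G.IsArrow (G.comp g h) a c where
  src_eq := (G.src_comp g h (hg.tgt_eq_src hh)).trans hg.src_eq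
  tgt_eq := (G.tgt_comp g h (hg.tgt_eq_src hh)).trans hh.tgt_eq

theorem id_comp (hg : G.IsArrow g a b) : G.comp (G.id a) g = g :=
  hg.src_eq ▸ G.id_comp g

theorem comp_id (hg : G.IsArrow g a b) : G.comp g (G.id b) = g :=
  hg.tgt_eq ▸ G.comp_id g

theorem comp_assoc (hg : G.IsArrow g a b) (hh : G.IsArrow h b c) (hk : G.IsArrow k c d) :
    G.comp (G.comp g h) k = G.comp g (G.comp h k) :=
  G.comp_assoc g h k (hg.tgt_eq_src hh) (hh.tgt_eq_src hk)

theorem eq_of_comp_eq_id (hg : G.IsArrow g a b) (hh : G.IsArrow h b a) (hk : G.IsArrow k a b)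
    (hgh : G.comp g h = G.id a) (hhk : G.comp h k = G.id b) : g = k :=
  calc
    g = G.comp g (G.comp h k) := by rw [hhk, hg.comp_id]
    _ = G.comp (G.comp g h) k := (hg.comp_assoc hh hk).symm
    _ = k := by rw [hgh, hk.id_comp]

end IsArrow

end DiscGroupoid

section Transport

variable {V A Q : Type*} {G : DiscGroupoid A Q} {Γ : SimpleGraph V} {f : V → Q} {φ : V → V → A}
  {x y z : V}

/-- The typing condition on a discrete field: `φ x y` is an arrow `f x → f y` for every adjacent
pair `x ~ y`. The values of `φ` at non-adjacent pairs are unconstrained. -/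
def IsEdgeField (G : DiscGroupoid A Q) (Γ : SimpleGraph V) (f : V → Q) (φ : V → V → A) : Prop :=
  ∀ ⦃x y⦄, Γ.Adj x y → G.IsArrow (φ x y) (f x) (f y)

/-- Flatness of a discrete field: its holonomy around every closed walk is trivial. -/
def IsFlatField (G : DiscGroupoid A Q) (Γ : SimpleGraph V) (f : V → Q) (φ : V → V → A) : Prop :=
  ∀ (x : V) (p : Γ.Walk x x), walkProd G f φ p = G.id (f x)

/-- Parallel transport of the field `φ` from `x` to `y`, taken along an arbitrarily chosen walk;
for a flat field the choice does not matter. -/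
noncomputable def parallelTransport (G : DiscGroupoid A Q) (f : V → Q) (φ : V → V → A)
    (hΓ : Γ.Preconnected) (x y : V) : A :=
  walkProd G f φ (hΓ x y).some

namespace IsEdgeField

theorem isArrow_walkProd (hφ : IsEdgeField G Γ f φ) (p : Γ.Walk x y) :
    G.IsArrow (walkProd G f φ p) (f x) (f y) := by
  induction p with
  | nil => exact G.isArrow_id _
  | cons hadj _ ih => exact (hφ hadj).comp ih

theorem walkProd_append (hφ : IsEdgeField G Γ f φ) (p : Γ.Walk x y) (q : Γ.Walk y z) :
    walkProd G f φ (p.append q) = G.comp (walkProd G f φ p) (walkProd G f φ q) := by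
  induction p with
  | nil => exact (hφ.isArrow_walkProd q).id_comp.symm
  | cons hadj p ih =>
    rw [SimpleGraph.Walk.cons_append, walkProd, walkProd, ih,
      (hφ hadj).comp_assoc (hφ.isArrow_walkProd p) (hφ.isArrow_walkProd q)]

theorem walkProd_toWalk (hφ : IsEdgeField G Γ f φ) (hadj : Γ.Adj x y) :
    walkProd G f φ hadj.toWalk = φ x y :=
  (hφ hadj).comp_id

end IsEdgeField

namespace IsFlatField

theorem comp_walkProd_eq_id (hflat : IsFlatField G Γ f φ) (hφ : IsEdgeField G Γ f φ)
    (p : Γ.Walk x y) (q : Γ.Walk y x) :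
    G.comp (walkProd G f φ p) (walkProd G f φ q) = G.id (f x) := by
  rw [← hφ.walkProd_append, hflat]

theorem walkProd_eq_walkProd (hflat : IsFlatField G Γ f φ) (hφ : IsEdgeField G Γ f φ)
    (p q : Γ.Walk x y) : walkProd G f φ p = walkProd G f φ q :=
  (hφ.isArrow_walkProd p).eq_of_comp_eq_id (hφ.isArrow_walkProd q.reverse)
    (hφ.isArrow_walkProd q) (hflat.comp_walkProd_eq_id hφ p q.reverse)
    (hflat.comp_walkProd_eq_id hφ q.reverse q)

theorem isPairMorphism_parallelTransport (hflat : IsFlatField G Γ f φ) (hφ : IsEdgeField G Γ f φ)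
    (hΓ : Γ.Preconnected) : IsPairMorphism G f (parallelTransport G f φ hΓ) := by
  refine ⟨fun _ _ => (hφ.isArrow_walkProd _).src_eq, fun _ _ => (hφ.isArrow_walkProd _).tgt_eq,
    fun x => hflat x _, fun x y z => ?_⟩
  exact (hφ.walkProd_append _ _).symm.trans (hflat.walkProd_eq_walkProd hφ _ _)

theorem parallelTransport_of_adj (hflat : IsFlatField G Γ f φ) (hφ : IsEdgeField G Γ f φ)
    (hΓ : Γ.Preconnected) (hadj : Γ.Adj x y) : parallelTransport G f φ hΓ x y = φ x y :=
  (hflat.walkProd_eq_walkProd hφ _ hadj.toWalk).trans (hφ.walkProd_toWalk hadj)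

end IsFlatField

namespace IsPairMorphism

variable {Φ : V → V → A}

theorem eq_walkProd (hΦ : IsPairMorphism G f Φ) (hext : ∀ x y, Γ.Adj x y → Φ x y = φ x y)
    (p : Γ.Walk x y) : Φ x y = walkProd G f φ p := by
  obtain ⟨-, -, map_id, map_comp⟩ := hΦ
  induction p with
  | nil => exact map_id _
  | cons hadj p ih => rw [walkProd, ← ih, ← hext _ _ hadj, map_comp]

theorem eq_parallelTransport (hΦ : IsPairMorphism G f Φ)
    (hext : ∀ x y, Γ.Adj x y → Φ x y = φ x y) (hΓ : Γ.Preconnected) :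
    Φ = parallelTransport G f φ hΓ :=
  funext₂ fun _ _ => hΦ.eq_walkProd hext _

end IsPairMorphism

end Transport

/-- Unique extension of a discrete field to a groupoid morphism: if `Γ` is a
connected simple graph on `V`, `G` a groupoid over `Q`, `f : V → Q`, and `φ`
attaches to every adjacent pair `x ~ y` an arrow `φ x y : f x → f y` with
`φ y x = (φ x y)⁻¹` and trivial holonomy around every closed walk, then there is
a unique morphism `Φ` from the pair groupoid on `V` to `G` with object map `f`
extending `φ`. -/
theorem discreteField_extends_uniquely {V A Q : Type*} (Γ : SimpleGraph V)
    (hconn : Γ.Connected) (G : DiscGroupoid A Q) (f : V → Q) (φ : V → V → A)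
    (hsrc : ∀ x y, Γ.Adj x y → G.src (φ x y) = f x)
    (htgt : ∀ x y, Γ.Adj x y → G.tgt (φ x y) = f y)
    (hsymm : ∀ x y, Γ.Adj x y → φ y x = G.inv (φ x y))
    (hflat : ∀ (x : V) (p : Γ.Walk x x), walkProd G f φ p = G.id (f x)) :
    ∃! Φ : V → V → A, IsPairMorphism G f Φ ∧ ∀ x y, Γ.Adj x y → Φ x y = φ x y := by
  have hφ : IsEdgeField G Γ f φ := fun x y hadj => ⟨hsrc x y hadj, htgt x y hadj⟩
  have hflat : IsFlatField G Γ f φ := hflat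
  have hΓ : Γ.Preconnected := hconn.preconnected
  refine ⟨parallelTransport G f φ hΓ, ⟨hflat.isPairMorphism_parallelTransport hφ hΓ, ?_⟩, ?_⟩
  · exact fun _ _ hadj => hflat.parallelTransport_of_adj hφ hΓ hadj
  · exact fun _ ⟨hΦ, hext⟩ => hΦ.eq_parallelTransport hext hΓ
end

section
/- Let G be a groupoid over a set Q and let k ≥ 3. If Ψ: 𝔾^k → 𝔾^k satisfies the morphism properties, then there exists a unique morphism of groupoids Φ: G → G such that Ψ((g₁, …, g_k)) = (Φ(g₁), …, Φ(g_k)) for every k-gon (g₁, …, g_k) ∈ 𝔾^k. (This is the paper's proposition establishing a one-to-one correspondence between groupoid morphisms Φ: G → G and mappings Ψ: 𝔾^k → 𝔾^k satisfying the morphism properties.) -/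
/-- The cyclic successor of an index `i` in `Fin k`. -/
def nextIdx {k : ℕ} (i : Fin k) : Fin k := ⟨(i.val + 1) % k, Nat.mod_lt _ i.pos⟩

/-- `g = (g₁, …, g_k)` is a `k`-gon in the groupoid `G`: consecutive components
are composable cyclically (`tgt gᵢ = src gᵢ₊₁`, indices mod `k`) and the product
`g₁ · g₂ ⋯ g_k` equals the identity arrow `1_{src g₁}`. -/
def DiscGroupoid.IsGon {A Q : Type*} (G : DiscGroupoid A Q) {k : ℕ}
    (g : Fin k → A) : Prop :=
  (∀ i : Fin k, G.tgt (g i) = G.src (g (nextIdx i))) ∧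
  ∀ hpos : 0 < k,
    (List.ofFn g).foldl G.comp (G.id (G.src (g ⟨0, hpos⟩))) =
      G.id (G.src (g ⟨0, hpos⟩))

/-- The discrete jet space `𝔾^k`: the set of `k`-gons of the groupoid `G`. -/
def DiscGroupoid.Gon {A Q : Type*} (G : DiscGroupoid A Q) (k : ℕ) :=
  {g : Fin k → A // G.IsGon g}

/-- A morphism of groupoids (a functor): maps on objects and arrows preserving
sources, targets, identities and composition. -/
structure DiscMorphism {A Q A' Q' : Type*} (G : DiscGroupoid A Q)
    (G' : DiscGroupoid A' Q') where
  obj : Q → Q'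
  arr : A → A'
  src_arr : ∀ g, G'.src (arr g) = obj (G.src g)
  tgt_arr : ∀ g, G'.tgt (arr g) = obj (G.tgt g)
  arr_id : ∀ x, arr (G.id x) = G'.id (obj x)
  arr_comp : ∀ g h, G.tgt g = G.src h →
    arr (G.comp g h) = G'.comp (arr g) (arr h)

/-- The constant tuple of identity arrows at a point is a `k`-gon. -/
theorem DiscGroupoid.isGon_const_id {A Q : Type*} (G : DiscGroupoid A Q)
    {k : ℕ} (x : Q) : G.IsGon (fun _ : Fin k => G.id x) := by
  have hxx : G.comp (G.id x) (G.id x) = G.id x := by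
    have h := G.id_comp (G.id x)
    rwa [G.src_id] at h
  constructor
  · intro i
    rw [G.tgt_id, G.src_id]
  · intro hpos
    have key : ∀ l : List A, (∀ a ∈ l, a = G.id x) →
        l.foldl G.comp (G.id x) = G.id x := by
      intro l
      induction l with
      | nil => intro _; rfl
      | cons a t ih =>
        intro hmem
        have ha : a = G.id x := hmem a (by simp)
        rw [List.foldl_cons, ha, hxx]
        exact ih fun b hb => hmem b (by simp [hb])
    simp only [G.src_id]
    exact key _ (by
      intro a ha
      simp only [List.mem_ofFn] at ha
      obtain ⟨i, hi⟩ := ha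
      exact hi.symm)

/-- The map `α̂⁽ⁱ⁾ : 𝔾^k → 𝔾^k` sending a `k`-gon `[g]` to the constant `k`-gon
`(1_{α(gᵢ)}, …, 1_{α(gᵢ)})`. -/
def DiscGroupoid.alphaHat {A Q : Type*} (G : DiscGroupoid A Q) {k : ℕ}
    (i : Fin k) (g : G.Gon k) : G.Gon k :=
  ⟨fun _ => G.id (G.src (g.1 i)), G.isGon_const_id _⟩

/-- A map `Ψ : 𝔾^k → 𝔾^k` satisfies the morphism properties if
(I) `Ψ ∘ α̂⁽ⁱ⁾ = α̂⁽ⁱ⁾ ∘ Ψ` for every `i`, and (II) whenever two `k`-gons have an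
equal component, their images have the corresponding components equal. -/
def MorphismProps {A Q : Type*} (G : DiscGroupoid A Q) {k : ℕ}
    (Ψ : G.Gon k → G.Gon k) : Prop :=
  (∀ (i : Fin k) (g : G.Gon k), Ψ (G.alphaHat i g) = G.alphaHat i (Ψ g)) ∧
  (∀ (g h : G.Gon k) (l m : Fin k), g.1 l = h.1 m → (Ψ g).1 l = (Ψ h).1 m)

/-!
Property (II) says that all components of `Ψ` are given by a single map `φ` on arrows, since every
arrow is a component of some `k`-gon. For `k ≥ 3`, the `k`-gons `(a, b, c, 1, …, 1)` are exactly
those with `a`, `b` composable and `c = (a · b)⁻¹`. Property (I) makes `φ` preserve identities, so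
`Ψ` maps such a `k`-gon to one of the same shape; hence `φ ((a · b)⁻¹) = (φ a · φ b)⁻¹`. Taking
`a = 1` shows that `φ` commutes with inversion, and therefore with composition.
-/

namespace DiscGroupoid

variable {A Q : Type*} (G : DiscGroupoid A Q)

theorem eq_inv_of_comp_eq_id {g h : A} (hgh : G.tgt g = G.src h)
    (hid : G.comp g h = G.id (G.src g)) : h = G.inv g :=
  calc h = G.comp (G.id (G.tgt g)) h := by rw [hgh, G.id_comp]
    _ = G.comp (G.inv g) (G.comp g h) := by
      rw [← G.inv_comp, G.comp_assoc _ _ _ (G.tgt_inv g) hgh]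
    _ = G.inv g := by rw [hid, ← G.tgt_inv, G.comp_id]

theorem inv_inv (g : A) : G.inv (G.inv g) = g :=
  (G.eq_inv_of_comp_eq_id (G.tgt_inv g) (by rw [G.inv_comp, G.src_inv])).symm

theorem inv_injective : Function.Injective G.inv :=
  Function.LeftInverse.injective G.inv_inv

theorem foldl_comp_replicate_id (n : ℕ) (g : A) :
    (List.replicate n (G.id (G.tgt g))).foldl G.comp g = g := by
  induction n with
  | zero => rfl
  | succ n ih => rw [List.replicate_succ, List.foldl_cons, G.comp_id, ih]

end DiscGroupoid

theorem nextIdx_mk_of_lt {k m : ℕ} (h : m + 1 < k) :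
    nextIdx ⟨m, Nat.lt_of_succ_lt h⟩ = ⟨m + 1, h⟩ :=
  Fin.ext (Nat.mod_eq_of_lt h)

theorem nextIdx_last (n : ℕ) : nextIdx (Fin.last n) = 0 :=
  Fin.ext (Nat.mod_self (n + 1))

namespace DiscGroupoid

variable {A Q : Type*} (G : DiscGroupoid A Q)

/-- The tuple `(a, b, c, 1, …, 1)` of length `n + 3`: the triangle `(a, b, c)` padded with identity
arrows at the source of `a`. It is a `k`-gon only under the conditions of `isGon_triangle_iff`. -/
def triangle (n : ℕ) (a b c : A) : Fin (n + 3) → A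
  | ⟨0, _⟩ => a
  | ⟨1, _⟩ => b
  | ⟨2, _⟩ => c
  | ⟨_ + 3, _⟩ => G.id (G.src a)

variable {n : ℕ} {a b c : A}

theorem src_triangle_nextIdx {m : ℕ} (hm : m + 2 < n + 3) :
    G.src (G.triangle n a b c (nextIdx ⟨m + 2, hm⟩)) = G.src a := by
  obtain hlt | rfl : m < n ∨ m = n := by omega
  · rw [nextIdx_mk_of_lt (by omega : m + 2 + 1 < n + 3)]
    exact G.src_id _
  · exact congrArg (fun i ↦ G.src (G.triangle m a b c i)) (nextIdx_last (m + 2))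

theorem triangle_composable_iff :
    (∀ i, G.tgt (G.triangle n a b c i) = G.src (G.triangle n a b c (nextIdx i))) ↔
      G.tgt a = G.src b ∧ G.tgt b = G.src c ∧ G.tgt c = G.src a := by
  have next_zero : nextIdx (⟨0, by omega⟩ : Fin (n + 3)) = ⟨1, by omega⟩ :=
    nextIdx_mk_of_lt (by omega)
  have next_one : nextIdx (⟨1, by omega⟩ : Fin (n + 3)) = ⟨2, by omega⟩ :=
    nextIdx_mk_of_lt (by omega)
  constructor
  · intro h
    have hab := h ⟨0, by omega⟩
    have hbc := h ⟨1, by omega⟩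
    have hca := h ⟨0 + 2, by omega⟩
    rw [next_zero] at hab
    rw [next_one] at hbc
    rw [G.src_triangle_nextIdx] at hca
    exact ⟨hab, hbc, hca⟩
  · rintro ⟨hab, hbc, hca⟩ ⟨_ | _ | _ | m, hi⟩
    · rw [next_zero]
      exact hab
    · rw [next_one]
      exact hbc
    · rw [G.src_triangle_nextIdx (m := 0)]
      exact hca
    · rw [G.src_triangle_nextIdx (m := m + 1)]
      exact G.tgt_id _

theorem foldl_comp_triangle (hab : G.tgt a = G.src b) (hbc : G.tgt b = G.src c)
    (hca : G.tgt c = G.src a) :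
    (List.ofFn (G.triangle n a b c)).foldl G.comp (G.id (G.src a)) =
      G.comp (G.comp a b) c := by
  have ofFn_triangle : List.ofFn (G.triangle n a b c) =
      a :: b :: c :: List.replicate n (G.id (G.src a)) := by
    rw [List.ofFn_succ, List.ofFn_succ, List.ofFn_succ, ← List.ofFn_const]
    rfl
  have tgt_abc : G.tgt (G.comp (G.comp a b) c) = G.src a := by
    rw [G.tgt_comp _ _ (by rw [G.tgt_comp _ _ hab, hbc]), hca]
  rw [ofFn_triangle, List.foldl_cons, List.foldl_cons, List.foldl_cons, G.id_comp, ← tgt_abc,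
    G.foldl_comp_replicate_id]

theorem isGon_triangle_iff :
    G.IsGon (G.triangle n a b c) ↔ G.tgt a = G.src b ∧ c = G.inv (G.comp a b) := by
  rw [IsGon, triangle_composable_iff]
  constructor
  · rintro ⟨⟨hab, hbc, hca⟩, hprod⟩
    refine ⟨hab, G.eq_inv_of_comp_eq_id (by rw [G.tgt_comp _ _ hab, hbc]) ?_⟩
    rw [G.src_comp _ _ hab, ← G.foldl_comp_triangle hab hbc hca]
    exact hprod (by omega)
  · rintro ⟨hab, rfl⟩
    have hbc : G.tgt b = G.src (G.inv (G.comp a b)) := by rw [G.src_inv, G.tgt_comp _ _ hab]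
    have hca : G.tgt (G.inv (G.comp a b)) = G.src a := by rw [G.tgt_inv, G.src_comp _ _ hab]
    refine ⟨⟨hab, hbc, hca⟩, fun _ ↦ (G.foldl_comp_triangle hab hbc hca).trans ?_⟩
    rw [G.comp_inv, G.src_comp _ _ hab]
    rfl

/-- The `(n + 3)`-gon `(a, b, (a · b)⁻¹, 1, …, 1)` of a composable pair of arrows. -/
def triangleGon (n : ℕ) (a b : A) (hab : G.tgt a = G.src b) : G.Gon (n + 3) :=
  ⟨G.triangle n a b (G.inv (G.comp a b)), G.isGon_triangle_iff.2 ⟨hab, rfl⟩⟩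

/-- The `(n + 3)`-gon `(a, 1, a⁻¹, 1, …, 1)`, exhibiting `a` as a component of a gon. -/
def gonOfArrow (n : ℕ) (a : A) : G.Gon (n + 3) :=
  G.triangleGon n a (G.id (G.tgt a)) (G.src_id _).symm

end DiscGroupoid

namespace DiscMorphism

variable {A Q A' Q' : Type*} {G : DiscGroupoid A Q} {G' : DiscGroupoid A' Q'}

theorem ext_arr {Φ Φ' : DiscMorphism G G'} (h : ∀ a, Φ.arr a = Φ'.arr a) : Φ = Φ' := by
  have obj_eq : Φ.obj = Φ'.obj := by
    funext x
    rw [← G.src_id x, ← Φ.src_arr, ← Φ'.src_arr, h]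
  cases Φ
  cases Φ'
  obtain rfl := obj_eq
  obtain rfl := funext h
  rfl

theorem ext_gon (n : ℕ) {Φ Φ' : DiscMorphism G G'}
    (h : ∀ (g : G.Gon (n + 3)) i, Φ.arr (g.1 i) = Φ'.arr (g.1 i)) : Φ = Φ' :=
  ext_arr fun a ↦ h (G.gonOfArrow n a) ⟨0, by omega⟩

/-- The morphism of groupoids with a given map `φ` on arrows, where `φ` is compatible with source
identities, with composability, and with the operation `(a, b) ↦ (a · b)⁻¹`. An object `x` is sent
to the source of `φ 1_x`. -/
def ofMapInvComp (φ : A → A') (map_id_src : ∀ a, φ (G.id (G.src a)) = G'.id (G'.src (φ a)))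
    (map_composable : ∀ a b, G.tgt a = G.src b → G'.tgt (φ a) = G'.src (φ b))
    (map_inv_comp : ∀ a b, G.tgt a = G.src b →
      φ (G.inv (G.comp a b)) = G'.inv (G'.comp (φ a) (φ b))) :
    DiscMorphism G G' where
  obj x := G'.src (φ (G.id x))
  arr := φ
  src_arr a := by rw [map_id_src, G'.src_id]
  tgt_arr a := map_composable a _ (G.src_id _).symm
  arr_id x := by rw [← map_id_src, G.src_id]
  arr_comp a b hab := by
    have map_inv (c : A) : φ (G.inv c) = G'.inv (φ c) := by
      have h := map_inv_comp (G.id (G.src c)) c (G.tgt_id _)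
      rwa [G.id_comp, map_id_src, G'.id_comp] at h
    exact G'.inv_injective (by rw [← map_inv, map_inv_comp a b hab])

end DiscMorphism

/-- The morphism properties (I) and (II) for a map between the jet spaces of two possibly different
groupoids; for `G = G'` this is `MorphismProps`. -/
structure IsGonMorphism {A Q A' Q' : Type*} {G : DiscGroupoid A Q} {G' : DiscGroupoid A' Q'}
    {k : ℕ} (Ψ : G.Gon k → G'.Gon k) : Prop where
  map_alphaHat : ∀ i g, Ψ (G.alphaHat i g) = G'.alphaHat i (Ψ g)
  component_congr : ∀ (g h : G.Gon k) (l m : Fin k), g.1 l = h.1 m → (Ψ g).1 l = (Ψ h).1 m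

/-- The map on arrows induced by a map `Ψ` of `(n + 3)`-gons: the first component of
`Ψ (a, 1, a⁻¹, 1, …, 1)`. -/
def inducedArr {A Q A' Q' : Type*} {G : DiscGroupoid A Q} {G' : DiscGroupoid A' Q'}
    {n : ℕ} (Ψ : G.Gon (n + 3) → G'.Gon (n + 3)) (a : A) : A' :=
  (Ψ (G.gonOfArrow n a)).1 ⟨0, by omega⟩

namespace IsGonMorphism

variable {A Q A' Q' : Type*} {G : DiscGroupoid A Q} {G' : DiscGroupoid A' Q'} {n : ℕ}
  {Ψ : G.Gon (n + 3) → G'.Gon (n + 3)}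

theorem apply_component (hΨ : IsGonMorphism Ψ) (g : G.Gon (n + 3)) (i : Fin (n + 3)) :
    (Ψ g).1 i = inducedArr Ψ (g.1 i) :=
  hΨ.component_congr g (G.gonOfArrow n (g.1 i)) i ⟨0, by omega⟩ rfl

theorem inducedArr_id_src (hΨ : IsGonMorphism Ψ) (a : A) :
    inducedArr Ψ (G.id (G.src a)) = G'.id (G'.src (inducedArr Ψ a)) := by
  let first : Fin (n + 3) := ⟨0, by omega⟩
  calc inducedArr Ψ (G.id (G.src a))
      = (Ψ (G.alphaHat first (G.gonOfArrow n a))).1 first :=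
        (hΨ.apply_component (G.alphaHat first (G.gonOfArrow n a)) first).symm
    _ = (G'.alphaHat first (Ψ (G.gonOfArrow n a))).1 first := by rw [hΨ.map_alphaHat]
    _ = G'.id (G'.src (inducedArr Ψ a)) := rfl

theorem apply_triangleGon (hΨ : IsGonMorphism Ψ) {a b : A} (hab : G.tgt a = G.src b) :
    (Ψ (G.triangleGon n a b hab)).1 = G'.triangle n (inducedArr Ψ a) (inducedArr Ψ b)
      (inducedArr Ψ (G.inv (G.comp a b))) := by
  funext i
  rw [hΨ.apply_component]
  obtain ⟨_ | _ | _ | _, _⟩ := i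
  · rfl
  · rfl
  · rfl
  · exact hΨ.inducedArr_id_src a

theorem inducedArr_inv_comp (hΨ : IsGonMorphism Ψ) {a b : A} (hab : G.tgt a = G.src b) :
    G'.tgt (inducedArr Ψ a) = G'.src (inducedArr Ψ b) ∧
      inducedArr Ψ (G.inv (G.comp a b)) =
        G'.inv (G'.comp (inducedArr Ψ a) (inducedArr Ψ b)) := by
  rw [← G'.isGon_triangle_iff (n := n), ← hΨ.apply_triangleGon hab]
  exact (Ψ (G.triangleGon n a b hab)).2

/-- The morphism of groupoids induced by a map of jet spaces with the morphism properties. -/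
def toDiscMorphism (hΨ : IsGonMorphism Ψ) : DiscMorphism G G' :=
  .ofMapInvComp (inducedArr Ψ) hΨ.inducedArr_id_src
    (fun _ _ hab ↦ (hΨ.inducedArr_inv_comp hab).1)
    (fun _ _ hab ↦ (hΨ.inducedArr_inv_comp hab).2)

end IsGonMorphism

theorem morphismProps_iff_induced_by_groupoid_morphism_general {A Q A' Q' : Type*}
    {G : DiscGroupoid A Q} {G' : DiscGroupoid A' Q'} {k : ℕ} (hk : 3 ≤ k)
    {Ψ : G.Gon k → G'.Gon k} (hΨ : IsGonMorphism Ψ) :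
    ∃! Φ : DiscMorphism G G', ∀ g : G.Gon k, (Ψ g).1 = fun i => Φ.arr (g.1 i) := by
  obtain ⟨n, rfl⟩ := Nat.exists_eq_add_of_le' hk
  refine ⟨hΨ.toDiscMorphism, fun g ↦ funext (hΨ.apply_component g), fun Φ hΦ ↦ ?_⟩
  refine DiscMorphism.ext_gon n fun g i ↦ ?_
  calc Φ.arr (g.1 i) = (Ψ g).1 i := (congrFun (hΦ g) i).symm
    _ = hΨ.toDiscMorphism.arr (g.1 i) := hΨ.apply_component g i

/-- For `k ≥ 3`, every map `Ψ : 𝔾^k → 𝔾^k` satisfying the morphism properties is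
induced, componentwise and in a unique way, by a morphism of groupoids
`Φ : G → G`. -/
theorem morphismProps_iff_induced_by_groupoid_morphism {A Q : Type*}
    (G : DiscGroupoid A Q) (k : ℕ) (hk : 3 ≤ k)
    (Ψ : G.Gon k → G.Gon k) (hΨ : MorphismProps G Ψ) :
    ∃! Φ : DiscMorphism G G, ∀ g : G.Gon k, (Ψ g).1 = fun i => Φ.arr (g.1 i) := by
  exact morphismProps_iff_induced_by_groupoid_morphism_general hk ⟨hΨ.1, hΨ.2⟩
end

section
/- Let Q be a real normed vector space and let L: Q × Q × Q × Q → ℝ be continuously Fréchet differentiable. For a discrete field φ: ℤ × ℤ → Q the following are equivalent. (i) Stationarity of the action sum: for every finitely supported map δ: ℤ × ℤ → Q and every finite set F ⊆ ℤ × ℤ containing all (i,j) for which δ is nonzero at at least one of the four points (i,j), (i+1,j), (i+1,j+1), (i,j+1), the real function t ↦ Σ_{(i,j) ∈ F} L(φ(i,j) + t·δ(i,j), φ(i+1,j) + t·δ(i+1,j), φ(i+1,j+1) + t·δ(i+1,j+1), φ(i,j+1) + t·δ(i,j+1)) has derivative 0 at t = 0. (ii) The discrete Euler–Lagrange field equations: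 for every (i,j) ∈ ℤ × ℤ, the continuous linear functional D₁L(φ(i,j), φ(i+1,j), φ(i+1,j+1), φ(i,j+1)) + D₂L(φ(i−1,j), φ(i,j), φ(i,j+1), φ(i−1,j+1)) + D₃L(φ(i−1,j−1), φ(i,j−1), φ(i,j), φ(i−1,j)) + D₄L(φ(i,j−1), φ(i+1,j−1), φ(i+1,j), φ(i,j)) on Q is zero, where D_aL(q₁,q₂,q₃,q₄) denotes the partial Fréchet derivative of L with respect to its a-th argument at (q₁,q₂,q₃,q₄). -/
/-!
The derivative of the action sum along `δ` is the sum over faces of `D L` applied to the corner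
values of `δ`. Splitting this by corners and shifting each of the resulting sums so that it runs
over vertices instead of faces (summation by parts) turns it into `∑ q, EL q (δ q)`, where `EL q`
collects the partial derivatives of `L` at the faces around `q`. It vanishes for every finitely
supported `δ` exactly when `EL = 0`, as one sees by varying the field at a single vertex.
-/

theorem sum_comp_add_right_eq_finsum {V M : Type*} [AddGroup V] [AddCommMonoid M] (f : V → M)
    (a : V) (F : Finset V) (hF : ∀ p, f (p + a) ≠ 0 → p ∈ F) :
    ∑ p ∈ F, f (p + a) = ∑ᶠ q, f q :=
  calc
    ∑ p ∈ F, f (p + a) = ∑ᶠ p, f (p + a) := (finsum_eq_sum_of_support_subset _ hF).symm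
    _ = ∑ᶠ q, f q := finsum_comp_equiv (Equiv.addRight a)

/-- The shape of the faces of a translation-invariant mesh with vertex group `V`: the face based at
`p` has the corners `p + offset a`, and `slot a` inserts a field value at the corner `a` into the
space `P` of corner values of a face. Encoding the slots as linear maps into `P`, instead of taking
`P = ι → Q`, allows an iterated product such as `Q × Q × Q × Q`. -/
structure Stencil (𝕜 ι V Q P : Type*) [NontriviallyNormedField 𝕜]
    [NormedAddCommGroup Q] [NormedSpace 𝕜 Q] [NormedAddCommGroup P] [NormedSpace 𝕜 P] where
  offset : ι → V
  slot : ι → Q →L[𝕜] P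

namespace Stencil

variable {𝕜 ι V Q P E : Type*} [NontriviallyNormedField 𝕜] [AddGroup V]
  [NormedAddCommGroup Q] [NormedSpace 𝕜 Q] [NormedAddCommGroup P] [NormedSpace 𝕜 P]
  [NormedAddCommGroup E] [NormedSpace 𝕜 E]

/-- A finite set of faces covers a variation `δ` if it contains every face with a corner at which
`δ` is nonzero, so that the action over the remaining faces does not change along `δ`. -/
def Covers (S : Stencil 𝕜 ι V Q P) (F : Finset V) (δ : V → Q) : Prop :=
  ∀ p a, δ (p + S.offset a) ≠ 0 → p ∈ F

variable [Fintype ι]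

/-- The corner values of the field `φ` on the face based at `p`. -/
def faceValue (S : Stencil 𝕜 ι V Q P) (φ : V → Q) (p : V) : P :=
  ∑ a, S.slot a (φ (p + S.offset a))

/-- Stationarity of the action sum of the discrete Lagrangian `L` at the field `φ`, under finitely
supported variations. Since the sum over all faces need not converge, the action is restricted to
the finite sets of faces that cover the variation. -/
def IsStationary (S : Stencil 𝕜 ι V Q P) (L : P → E) (φ : V → Q) : Prop :=
  ∀ δ : V → Q, δ.support.Finite → ∀ F : Finset V, S.Covers F δ →
    HasDerivAt (fun t : 𝕜 => ∑ p ∈ F, L (S.faceValue (φ + t • δ) p)) 0 0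

/-- The discrete Euler–Lagrange functional at the vertex `q`: the sum over the faces having `q` as
a corner of the partial derivative of `L` in the slot of that corner. The face whose corner `a` is
`q` is the one based at `q - S.offset a`. -/
noncomputable def eulerLagrange (S : Stencil 𝕜 ι V Q P) (L : P → E) (φ : V → Q) (q : V) :
    Q →L[𝕜] E :=
  ∑ a, fderiv 𝕜 L (S.faceValue φ (q - S.offset a)) ∘L S.slot a

variable (S : Stencil 𝕜 ι V Q P) {L : P → E} {φ δ : V → Q} {F : Finset V}

theorem faceValue_add_smul (t : 𝕜) (p : V) :
    S.faceValue (φ + t • δ) p = S.faceValue φ p + t • S.faceValue δ p := by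
  simp only [faceValue, Pi.add_apply, Pi.smul_apply, map_add, map_smul, Finset.sum_add_distrib,
    Finset.smul_sum]

theorem sum_apply_faceValue_eq_finsum (hδ : δ.support.Finite) (hF : S.Covers F δ)
    (D : V → P →L[𝕜] E) :
    ∑ p ∈ F, D p (S.faceValue δ p) = ∑ᶠ q, ∑ a, D (q - S.offset a) (S.slot a (δ q)) := by
  have apply_eq_zero (a : ι) {q : V} (hq : δ q = 0) :
      D (q - S.offset a) (S.slot a (δ q)) = 0 := by
    rw [hq, map_zero, map_zero]
  calc
    ∑ p ∈ F, D p (S.faceValue δ p)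
      = ∑ a, ∑ p ∈ F, D (p + S.offset a - S.offset a) (S.slot a (δ (p + S.offset a))) := by
        simp only [faceValue, map_sum, add_sub_cancel_right]
        exact Finset.sum_comm
    _ = ∑ a, ∑ᶠ q, D (q - S.offset a) (S.slot a (δ q)) :=
        Finset.sum_congr rfl fun a _ =>
          sum_comp_add_right_eq_finsum (fun q => D (q - S.offset a) (S.slot a (δ q))) _ F
            fun p hp => hF p a (mt (apply_eq_zero a) hp)
    _ = ∑ᶠ q, ∑ a, D (q - S.offset a) (S.slot a (δ q)) :=
        (finsum_sum_comm _ _ fun a _ => hδ.subset fun _ => mt (apply_eq_zero a)).symm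

theorem hasDerivAt_sum_faceValue_add_smul (hL : ∀ p, DifferentiableAt 𝕜 L (S.faceValue φ p))
    (hδ : δ.support.Finite) (hF : S.Covers F δ) :
    HasDerivAt (fun t : 𝕜 => ∑ p ∈ F, L (S.faceValue (φ + t • δ) p))
      (∑ᶠ q, S.eulerLagrange L φ q (δ q)) 0 := by
  have derivative_eq : ∑ p ∈ F, fderiv 𝕜 L (S.faceValue φ p) (S.faceValue δ p) =
      ∑ᶠ q, S.eulerLagrange L φ q (δ q) := by
    simp only [S.sum_apply_faceValue_eq_finsum hδ hF fun p => fderiv 𝕜 L (S.faceValue φ p),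
      eulerLagrange, sum_apply, ContinuousLinearMap.comp_apply]
  simp only [faceValue_add_smul, ← derivative_eq]
  exact HasDerivAt.fun_sum fun p _ => (hL p).hasFDerivAt.hasLineDerivAt _

theorem covers_image_single [DecidableEq V] (q : V) (v : Q) :
    S.Covers (Finset.univ.image fun a => q - S.offset a) (Pi.single q v) := by
  intro p a hp
  have corner_eq : p + S.offset a = q := Pi.support_single_subset hp
  exact Finset.mem_image.2 ⟨a, Finset.mem_univ a, sub_eq_of_eq_add corner_eq.symm⟩

theorem isStationary_iff_eulerLagrange_eq_zero
    (hL : ∀ p, DifferentiableAt 𝕜 L (S.faceValue φ p)) :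
    S.IsStationary L φ ↔ ∀ q, S.eulerLagrange L φ q = 0 := by
  classical
  constructor
  · intro stationary q
    ext v
    have hδ : (Pi.single q v : V → Q).support.Finite :=
      (Set.finite_singleton q).subset Pi.support_single_subset
    have hF := S.covers_image_single q v
    calc
      S.eulerLagrange L φ q v
        = ∑ᶠ r, S.eulerLagrange L φ r ((Pi.single q v : V → Q) r) := by
          rw [finsum_eq_single _ q fun r hr => by rw [Pi.single_eq_of_ne hr, map_zero],
            Pi.single_eq_same]
      _ = 0 := (S.hasDerivAt_sum_faceValue_add_smul hL hδ hF).unique (stationary _ hδ _ hF)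
  · intro hEL δ hδ F hF
    simpa only [hEL, zero_apply, finsum_zero] using
      S.hasDerivAt_sum_faceValue_add_smul hL hδ hF

end Stencil

open ContinuousLinearMap in
/-- The faces of the square mesh on `ℤ × ℤ`, with the corners of a square in counterclockwise order
from its lower left corner, at which it is based. -/
def unitSquare (𝕜 Q : Type*) [NontriviallyNormedField 𝕜] [NormedAddCommGroup Q]
    [NormedSpace 𝕜 Q] : Stencil 𝕜 (Fin 4) (ℤ × ℤ) Q (Q × Q × Q × Q) where
  offset := ![(0, 0), (1, 0), (1, 1), (0, 1)]
  slot := ![inl 𝕜 Q (Q × Q × Q), inr 𝕜 Q (Q × Q × Q) ∘L inl 𝕜 Q (Q × Q),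
    inr 𝕜 Q (Q × Q × Q) ∘L inr 𝕜 Q (Q × Q) ∘L inl 𝕜 Q Q,
    inr 𝕜 Q (Q × Q × Q) ∘L inr 𝕜 Q (Q × Q) ∘L inr 𝕜 Q Q]

section UnitSquare

variable {𝕜 Q E : Type*} [NontriviallyNormedField 𝕜] [NormedAddCommGroup Q] [NormedSpace 𝕜 Q]
  [NormedAddCommGroup E] [NormedSpace 𝕜 E]

theorem faceValue_unitSquare (φ : ℤ × ℤ → Q) (p : ℤ × ℤ) :
    (unitSquare 𝕜 Q).faceValue φ p =
      (φ (p.1, p.2), φ (p.1 + 1, p.2), φ (p.1 + 1, p.2 + 1), φ (p.1, p.2 + 1)) := by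
  simp [Stencil.faceValue, unitSquare, Fin.sum_univ_four, Prod.add_def]

theorem covers_unitSquare_iff (F : Finset (ℤ × ℤ)) (δ : ℤ × ℤ → Q) :
    (unitSquare 𝕜 Q).Covers F δ ↔ ∀ i j : ℤ,
      (δ (i, j) ≠ 0 ∨ δ (i + 1, j) ≠ 0 ∨ δ (i + 1, j + 1) ≠ 0 ∨ δ (i, j + 1) ≠ 0) →
        (i, j) ∈ F := by
  simp [Stencil.Covers, unitSquare, Fin.forall_fin_succ, or_imp]

theorem eulerLagrange_unitSquare_apply (L : Q × Q × Q × Q → E) (φ : ℤ × ℤ → Q) (i j : ℤ)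
    (v : Q) :
    (unitSquare 𝕜 Q).eulerLagrange L φ (i, j) v =
      fderiv 𝕜 L (φ (i, j), φ (i + 1, j), φ (i + 1, j + 1), φ (i, j + 1)) (v, 0, 0, 0)
        + fderiv 𝕜 L (φ (i - 1, j), φ (i, j), φ (i, j + 1), φ (i - 1, j + 1)) (0, v, 0, 0)
        + fderiv 𝕜 L (φ (i - 1, j - 1), φ (i, j - 1), φ (i, j), φ (i - 1, j)) (0, 0, v, 0)
        + fderiv 𝕜 L (φ (i, j - 1), φ (i + 1, j - 1), φ (i + 1, j), φ (i, j))
          (0, 0, 0, v) := by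
  simp only [Stencil.eulerLagrange, faceValue_unitSquare]
  simp [unitSquare, Fin.sum_univ_four, ← Prod.zero_eq_mk]

end UnitSquare

theorem discrete_action_stationary_iff_EL_general {𝕜 Q E : Type*} [NontriviallyNormedField 𝕜]
    [NormedAddCommGroup Q] [NormedSpace 𝕜 Q] [NormedAddCommGroup E] [NormedSpace 𝕜 E]
    (L : Q × Q × Q × Q → E) (φ : ℤ × ℤ → Q)
    (hL : ∀ i j : ℤ,
      DifferentiableAt 𝕜 L (φ (i, j), φ (i + 1, j), φ (i + 1, j + 1), φ (i, j + 1))) :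
    (∀ δ : ℤ × ℤ → Q, (Function.support δ).Finite →
      ∀ F : Finset (ℤ × ℤ),
        (∀ i j : ℤ,
          (δ (i, j) ≠ 0 ∨ δ (i + 1, j) ≠ 0 ∨ δ (i + 1, j + 1) ≠ 0 ∨
            δ (i, j + 1) ≠ 0) → (i, j) ∈ F) →
        HasDerivAt (fun t : 𝕜 => ∑ p ∈ F,
          L (φ (p.1, p.2) + t • δ (p.1, p.2),
             φ (p.1 + 1, p.2) + t • δ (p.1 + 1, p.2),
             φ (p.1 + 1, p.2 + 1) + t • δ (p.1 + 1, p.2 + 1),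
             φ (p.1, p.2 + 1) + t • δ (p.1, p.2 + 1))) 0 0)
    ↔
    (∀ i j : ℤ, ∀ v : Q,
      fderiv 𝕜 L (φ (i, j), φ (i + 1, j), φ (i + 1, j + 1), φ (i, j + 1))
          (v, 0, 0, 0)
        + fderiv 𝕜 L (φ (i - 1, j), φ (i, j), φ (i, j + 1), φ (i - 1, j + 1))
          (0, v, 0, 0)
        + fderiv 𝕜 L (φ (i - 1, j - 1), φ (i, j - 1), φ (i, j), φ (i - 1, j))
          (0, 0, v, 0)
        + fderiv 𝕜 L (φ (i, j - 1), φ (i + 1, j - 1), φ (i + 1, j), φ (i, j))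
          (0, 0, 0, v) = 0) := by
  have differentiableAt_face (p : ℤ × ℤ) :
      DifferentiableAt 𝕜 L ((unitSquare 𝕜 Q).faceValue φ p) := by
    simpa only [faceValue_unitSquare] using hL p.1 p.2
  have stationary_iff :=
    (unitSquare 𝕜 Q).isStationary_iff_eulerLagrange_eq_zero differentiableAt_face
  simpa only [Stencil.IsStationary, covers_unitSquare_iff, faceValue_unitSquare, Pi.add_apply,
    Pi.smul_apply, Prod.forall, ContinuousLinearMap.ext_iff, eulerLagrange_unitSquare_apply,
    zero_apply] using stationary_iff

/-- Discrete Euler–Lagrange field equations for the pair groupoid over `Q` on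
the square mesh `ℤ × ℤ` in `ℝ²`.  For a `C¹` discrete Lagrangian
`L : Q⁴ → ℝ` and a discrete field `φ : ℤ × ℤ → Q`, stationarity of the action
sum under all finitely supported variations (the derivative at `t = 0` of the
action over any finite set of faces containing all faces touched by the
variation vanishes) is equivalent to the discrete Euler–Lagrange field
equations: at every vertex `(i, j)` the sum of the four partial Fréchet
derivatives of `L`, taken at the four faces containing `(i, j)` and in the slot
corresponding to `(i, j)`, vanishes as a functional on `Q`. -/
theorem discrete_action_stationary_iff_EL {Q : Type*} [NormedAddCommGroup Q]
    [NormedSpace ℝ Q] (L : Q × Q × Q × Q → ℝ) (hL : ContDiff ℝ 1 L)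
    (φ : ℤ × ℤ → Q) :
    (∀ δ : ℤ × ℤ → Q, (Function.support δ).Finite →
      ∀ F : Finset (ℤ × ℤ),
        (∀ i j : ℤ,
          (δ (i, j) ≠ 0 ∨ δ (i + 1, j) ≠ 0 ∨ δ (i + 1, j + 1) ≠ 0 ∨
            δ (i, j + 1) ≠ 0) → (i, j) ∈ F) →
        HasDerivAt (fun t : ℝ => ∑ p ∈ F,
          L (φ (p.1, p.2) + t • δ (p.1, p.2),
             φ (p.1 + 1, p.2) + t • δ (p.1 + 1, p.2),
             φ (p.1 + 1, p.2 + 1) + t • δ (p.1 + 1, p.2 + 1),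
             φ (p.1, p.2 + 1) + t • δ (p.1, p.2 + 1))) 0 0)
    ↔
    (∀ i j : ℤ, ∀ v : Q,
      fderiv ℝ L (φ (i, j), φ (i + 1, j), φ (i + 1, j + 1), φ (i, j + 1))
          (v, 0, 0, 0)
        + fderiv ℝ L (φ (i - 1, j), φ (i, j), φ (i, j + 1), φ (i - 1, j + 1))
          (0, v, 0, 0)
        + fderiv ℝ L (φ (i - 1, j - 1), φ (i, j - 1), φ (i, j), φ (i - 1, j))
          (0, 0, v, 0)
        + fderiv ℝ L (φ (i, j - 1), φ (i + 1, j - 1), φ (i + 1, j), φ (i, j))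
          (0, 0, 0, v) = 0) :=
  discrete_action_stationary_iff_EL_general L φ fun _ _ => hL.differentiable one_ne_zero _
end
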